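/- Let R be an associative ring with identity and Q a quiver. If X ∈ Rep(Q,R) lies in Φ(GF(R)), then its character representation X⁺ = Hom(X, Q/Z) ∈ Rep(Q^op,R^op) lies in Ψ(GI(R^op)): for each vertex i, the canonical map ψ_i^{X⁺} : X⁺(i) → Π_{a∈Q_1, t(a)=i} X⁺(s(a)) is surjective, and the right R-modules X⁺(i) and Ker(ψ_i^{X⁺}) are Gorenstein injective. -/

import Mathlib

open CategoryTheory CategoryTheory.Limits Opposite
open scoped DirectSum

universe w v u

namespace QuiverGF


section Cat

variable {A : Type u} [Category.{v} A] [Abelian A]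

/-- `Ext¹(X,Y) = 0`, expressed as: every short exact sequence `0 → Y → E → X → 0` splits. -/
def ext1Zero (X Y : A) : Prop :=
  ∀ (E : A) (f : Y ⟶ E) (g : E ⟶ X) (w : f ≫ g = 0),
    (ShortComplex.mk f g w).ShortExact → ∃ s : X ⟶ E, s ≫ g = 𝟙 X

/-- `extHigherZero n X Y` encodes `Ext^{n+1}(X,Y) = 0`, defined by dimension shifting along
short exact sequences `0 → Y → I → Z → 0` with `I` injective. -/
def extHigherZero : ℕ → A → A → Prop
  | 0 => fun X Y => ext1Zero X Y
  | n + 1 => fun X Y => ∀ (I Z : A) (f : Y ⟶ I) (g : I ⟶ Z) (w : f ≫ g = 0),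
      Injective I → (ShortComplex.mk f g w).ShortExact → extHigherZero n X Z

/-- The right `Ext¹`-orthogonal class. -/
def rightPerp (S : Set A) : Set A := {Y | ∀ X ∈ S, ext1Zero X Y}

/-- The left `Ext¹`-orthogonal class. -/
def leftPerp (S : Set A) : Set A := {X | ∀ Y ∈ S, ext1Zero X Y}

/-- `(X, Y)` is a cotorsion pair. -/
structure IsCotorsionPair (X Y : Set A) : Prop where
  right_eq : Y = rightPerp X
  left_eq : X = leftPerp Y

/-- Completeness of a pair of classes: every object admits approximation sequences. -/
def IsCompleteCP (X Y : Set A) : Prop :=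
  (∀ M : A, ∃ (YM XM : A) (f : M ⟶ YM) (g : YM ⟶ XM) (w : f ≫ g = 0),
     (ShortComplex.mk f g w).ShortExact ∧ YM ∈ Y ∧ XM ∈ X) ∧
  (∀ M : A, ∃ (YM XM : A) (f : YM ⟶ XM) (g : XM ⟶ M) (w : f ≫ g = 0),
     (ShortComplex.mk f g w).ShortExact ∧ YM ∈ Y ∧ XM ∈ X)

/-- Heredity: `Ext^i(X,Y) = 0` for all `i ≥ 1`. -/
def IsHereditaryCP (X Y : Set A) : Prop :=
  ∀ M ∈ X, ∀ N ∈ Y, ∀ n : ℕ, extHigherZero n M N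

/-- A thick class of objects. -/
structure IsThick (W : Set A) : Prop where
  summand : ∀ Z ∈ W, ∀ (X : A) (i : X ⟶ Z) (r : Z ⟶ X), i ≫ r = 𝟙 X → X ∈ W
  ext_closed : ∀ (S : ShortComplex A), S.ShortExact → S.X₁ ∈ W → S.X₃ ∈ W → S.X₂ ∈ W
  ker_epi : ∀ (S : ShortComplex A), S.ShortExact → S.X₂ ∈ W → S.X₃ ∈ W → S.X₁ ∈ W
  coker_mono : ∀ (S : ShortComplex A), S.ShortExact → S.X₁ ∈ W → S.X₂ ∈ W → S.X₃ ∈ W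

/-- A Hovey triple. -/
structure IsHoveyTriple (C W F : Set A) : Prop where
  thick : IsThick W
  cp1 : IsCotorsionPair C (W ∩ F)
  cp1_complete : IsCompleteCP C (W ∩ F)
  cp2 : IsCotorsionPair (C ∩ W) F
  cp2_complete : IsCompleteCP (C ∩ W) F

/-- A hereditary Hovey triple. -/
structure IsHereditaryHoveyTriple (C W F : Set A) extends IsHoveyTriple C W F : Prop where
  cp1_hereditary : IsHereditaryCP C (W ∩ F)
  cp2_hereditary : IsHereditaryCP (C ∩ W) F

/-- `f : C ⟶ M` is an `S`-cover of `M`. -/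
def IsCover (S : Set A) {C M : A} (f : C ⟶ M) : Prop :=
  C ∈ S ∧ (∀ C' ∈ S, ∀ g : C' ⟶ M, ∃ h : C' ⟶ C, h ≫ f = g) ∧
    (∀ h : C ⟶ C, h ≫ f = f → IsIso h)

/-- `f : M ⟶ E` is an `S`-envelope of `M`. -/
def IsEnvelope (S : Set A) {M E : A} (f : M ⟶ E) : Prop :=
  E ∈ S ∧ (∀ E' ∈ S, ∀ g : M ⟶ E', ∃ h : E ⟶ E', f ≫ h = g) ∧
    (∀ h : E ⟶ E, f ≫ h = f → IsIso h)

/-- A perfect pair of classes: X-covers and Y-envelopes always exist. -/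
def IsPerfectCP (X Y : Set A) : Prop :=
  (∀ M : A, ∃ (C : A) (f : C ⟶ M), IsCover X f) ∧
  (∀ M : A, ∃ (E : A) (f : M ⟶ E), IsEnvelope Y f)

/-- `W` is a cogenerator for `X`. -/
def IsCogenerator (W X : Set A) : Prop :=
  W ⊆ X ∧ ∀ M ∈ X, ∃ (W' X' : A) (f : M ⟶ W') (g : W' ⟶ X') (w : f ≫ g = 0),
    (ShortComplex.mk f g w).ShortExact ∧ W' ∈ W ∧ X' ∈ X

end Cat

section Quiver

variable (V : Type w) [Quiver.{w} V]

/-- A quiver is left rooted if it has no infinite sequence of arrows `• → • → • → ⋯`. -/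
def LeftRooted : Prop := ¬ ∃ f : ℕ → V, ∀ n : ℕ, Nonempty (f n ⟶ f (n + 1))

variable {V}
variable {A : Type u} [Category.{v} A]

/-- A vertex of `V`, seen as an object of the path category. -/
abbrev vtx (i : V) : Paths V := i

section Phi

variable [Abelian A] [HasCoproducts.{w} A]

/-- The canonical morphism `φᵢˣ : ⊕_{a : j ⟶ i} X(j) ⟶ X(i)`. -/
noncomputable def phi (X : Paths V ⥤ A) (i : V) :
    (∐ fun p : Σ j : V, j ⟶ i => X.obj (vtx p.1)) ⟶ X.obj (vtx i) :=
  Sigma.desc fun p => X.map p.2.toPath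

/-- The class `Φ(S)` of representations. -/
noncomputable def PhiClass (S : Set A) : Set (Paths V ⥤ A) :=
  {X | ∀ i : V, Mono (phi X i) ∧ X.obj (vtx i) ∈ S ∧ cokernel (phi X i) ∈ S}

end Phi

/-- The class of representations with all vertex values in `S`. -/
def RepClass (S : Set A) : Set (Paths V ⥤ A) := {X | ∀ i : V, X.obj (vtx i) ∈ S}

section Psi

variable [Abelian A] [HasProducts.{w} A]

/-- The canonical morphism `ψᵢʸ : Y(i) ⟶ Π_{a : i ⟶ j} Y(j)`. -/
noncomputable def psi (Y : Paths V ⥤ A) (i : V) :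
    Y.obj (vtx i) ⟶ ∏ᶜ fun p : Σ j : V, i ⟶ j => Y.obj (vtx p.1) :=
  Pi.lift fun p => Y.map p.2.toPath

/-- The class `Ψ(S)` of representations. -/
noncomputable def PsiClass (S : Set A) : Set (Paths V ⥤ A) :=
  {Y | ∀ i : V, Epi (psi Y i) ∧ Y.obj (vtx i) ∈ S ∧ kernel (psi Y i) ∈ S}

end Psi

end Quiver




attribute [-instance] Submodule.Quotient.addCommMonoid

section NcTensor

variable (R : Type u) [Ring R]

variable (E : Type u) [AddCommGroup E] [Module Rᵐᵒᵖ E]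
variable (M : Type u) [AddCommGroup M] [Module R M]

/-- The defining relations of the tensor product `E ⊗_R M` of a right `R`-module `E`
and a left `R`-module `M` over a (possibly noncommutative) ring `R`. -/
def ncRel : Submodule ℤ (TensorProduct ℤ E M) :=
  Submodule.span ℤ {z | ∃ (e : E) (r : R) (m : M),
    z = (MulOpposite.op r • e) ⊗ₜ[ℤ] m - e ⊗ₜ[ℤ] (r • m)}

/-- The tensor product `E ⊗_R M` of a right `R`-module `E` and a left `R`-module `M`. -/
abbrev NcTensor := TensorProduct ℤ E M ⧸ ncRel R E M

/-- The canonical generator `e ⊗ m` of `E ⊗_R M`. -/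
noncomputable def NcTensor.tmul (e : E) (m : M) : NcTensor R E M :=
  Submodule.Quotient.mk (e ⊗ₜ[ℤ] m)

variable {E M}
variable {E' : Type u} [AddCommGroup E'] [Module Rᵐᵒᵖ E']
variable {M' : Type u} [AddCommGroup M'] [Module R M']

/-- Functoriality of the tensor product. -/
noncomputable def NcTensor.map (f : E →ₗ[Rᵐᵒᵖ] E') (g : M →ₗ[R] M') :
    NcTensor R E M →ₗ[ℤ] NcTensor R E' M' :=
  Submodule.mapQ _ _
    (TensorProduct.map f.toAddMonoidHom.toIntLinearMap g.toAddMonoidHom.toIntLinearMap)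
    (by
      refine Submodule.span_le.2 ?_
      rintro z ⟨e, r, m, rfl⟩
      refine Submodule.mem_comap.2 (Submodule.subset_span ?_)
      exact ⟨f e, r, g m, by
        erw [map_sub, TensorProduct.map_tmul, TensorProduct.map_tmul]
        simp⟩)

@[simp] lemma NcTensor.map_tmul (f : E →ₗ[Rᵐᵒᵖ] E') (g : M →ₗ[R] M') (e : E) (m : M) :
    NcTensor.map R f g (NcTensor.tmul R E M e m) = NcTensor.tmul R E' M' (f e) (g m) := by
  rfl

end NcTensor

section ModuleClasses

variable (R : Type u) [Ring R]

/-- A left `R`-module is flat if tensoring with it preserves injections of right `R`-modules. -/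
def IsFlatModule (M : ModuleCat.{u} R) : Prop :=
  ∀ (E E' : ModuleCat.{u} Rᵐᵒᵖ) (f : E ⟶ E'), Function.Injective f →
    Function.Injective (NcTensor.map R (f.hom : ↑E →ₗ[Rᵐᵒᵖ] ↑E') (LinearMap.id (M := ↑M)))

/-- Gorenstein flat left `R`-modules: cycles of exact complexes of flat modules which stay
exact after tensoring with any injective right `R`-module. -/
def IsGorensteinFlatModule (M : ModuleCat.{u} R) : Prop :=
  ∃ (F : ℤ → ModuleCat.{u} R) (d : ∀ n : ℤ, F n ⟶ F (n + 1)),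
    (∀ n, IsFlatModule R (F n)) ∧
    (∀ n, Function.Exact (d n) (d (n + 1))) ∧
    Nonempty (↑M ≃ₗ[R] ↥(LinearMap.ker ((d 0).hom : ↑(F 0) →ₗ[R] ↑(F (0 + 1))))) ∧
    ∀ (E : ModuleCat.{u} Rᵐᵒᵖ), Injective E → ∀ n : ℤ,
      Function.Exact (NcTensor.map R (LinearMap.id (M := ↑E)) ((d n).hom : ↑(F n) →ₗ[R] ↑(F (n + 1))))
        (NcTensor.map R (LinearMap.id (M := ↑E)) ((d (n + 1)).hom : ↑(F (n + 1)) →ₗ[R] ↑(F (n + 1 + 1))))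

/-- Projectively coresolved Gorenstein flat left `R`-modules. -/
def IsPGFModule (M : ModuleCat.{u} R) : Prop :=
  ∃ (P : ℤ → ModuleCat.{u} R) (d : ∀ n : ℤ, P n ⟶ P (n + 1)),
    (∀ n, Projective (P n)) ∧
    (∀ n, Function.Exact (d n) (d (n + 1))) ∧
    Nonempty (↑M ≃ₗ[R] ↥(LinearMap.ker ((d 0).hom : ↑(P 0) →ₗ[R] ↑(P (0 + 1))))) ∧
    ∀ (E : ModuleCat.{u} Rᵐᵒᵖ), Injective E → ∀ n : ℤ,
      Function.Exact (NcTensor.map R (LinearMap.id (M := ↑E)) ((d n).hom : ↑(P n) →ₗ[R] ↑(P (n + 1))))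
        (NcTensor.map R (LinearMap.id (M := ↑E)) ((d (n + 1)).hom : ↑(P (n + 1)) →ₗ[R] ↑(P (n + 1 + 1))))

/-- Gorenstein injective objects of an abelian category. -/
def IsGorensteinInjective {A : Type*} [Category A] [Abelian A] (M : A) : Prop :=
  ∃ (I : ℤ → A) (d : ∀ n : ℤ, I n ⟶ I (n + 1)),
    (∀ n, Injective (I n)) ∧
    (∀ n, ∃ w : d n ≫ d (n + 1) = 0, (ShortComplex.mk (d n) (d (n + 1)) w).Exact) ∧
    Nonempty (M ≅ kernel (d 0)) ∧
    ∀ (E : A), Injective E → ∀ n : ℤ,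
      Function.Exact (fun f : E ⟶ I n => f ≫ d n) (fun f : E ⟶ I (n + 1) => f ≫ d (n + 1))

end ModuleClasses



section Char

variable (R : Type u) [Ring R] (G : Type u) [AddCommGroup G]

section Left
variable (M : Type u) [AddCommGroup M] [Module R M]

/-- Right `R`-action on `Hom_ℤ(M, G)` for a left `R`-module `M`. -/
instance : SMul Rᵐᵒᵖ (M →+ G) :=
  ⟨fun r f => f.comp (DistribMulAction.toAddMonoidHom M r.unop)⟩

@[simp] lemma op_smul_addHom_apply (r : Rᵐᵒᵖ) (f : M →+ G) (m : M) :
    (r • f) m = f (r.unop • m) := rfl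

instance charRight : Module Rᵐᵒᵖ (M →+ G) where
  one_smul f := AddMonoidHom.ext fun m => by simp
  mul_smul r s f := AddMonoidHom.ext fun m => by simp [mul_smul]
  smul_zero r := AddMonoidHom.ext fun m => rfl
  smul_add r f g := AddMonoidHom.ext fun m => rfl
  add_smul r s f := AddMonoidHom.ext fun m => by simp [add_smul]
  zero_smul f := AddMonoidHom.ext fun m => by simp

end Left

section Right
variable (N : Type u) [AddCommGroup N] [Module Rᵐᵒᵖ N]

/-- Left `R`-action on `Hom_ℤ(N, G)` for a right `R`-module `N`. -/
instance : SMul R (N →+ G) :=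
  ⟨fun r f => f.comp (DistribMulAction.toAddMonoidHom N (MulOpposite.op r))⟩

@[simp] lemma smul_addHom_apply (r : R) (f : N →+ G) (n : N) :
    (r • f) n = f (MulOpposite.op r • n) := rfl

instance charLeft : Module R (N →+ G) where
  one_smul f := AddMonoidHom.ext fun n => by simp
  mul_smul r s f := AddMonoidHom.ext fun n => by simp [MulOpposite.op_mul, mul_smul]
  smul_zero r := AddMonoidHom.ext fun n => rfl
  smul_add r f g := AddMonoidHom.ext fun n => rfl
  add_smul r s f := AddMonoidHom.ext fun n => by simp [add_smul]
  zero_smul f := AddMonoidHom.ext fun n => by simp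

end Right

section Precomp

variable {R G}
variable {M N : Type u} [AddCommGroup M] [AddCommGroup N] [Module R M] [Module R N]

/-- Precomposition, as an `Rᵐᵒᵖ`-linear map between character modules. -/
def precompHom (h : M →ₗ[R] N) : (N →+ G) →ₗ[Rᵐᵒᵖ] (M →+ G) where
  toFun f := f.comp h.toAddMonoidHom
  map_add' f g := rfl
  map_smul' r f := AddMonoidHom.ext fun m => by simp [map_smul]

variable {P Q : Type u} [AddCommGroup P] [AddCommGroup Q] [Module Rᵐᵒᵖ P] [Module Rᵐᵒᵖ Q]

/-- Precomposition, as an `R`-linear map between character modules of right modules. -/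
def precompHomOp (h : P →ₗ[Rᵐᵒᵖ] Q) : (Q →+ G) →ₗ[R] (P →+ G) where
  toFun f := f.comp h.toAddMonoidHom
  map_add' f g := rfl
  map_smul' r f := AddMonoidHom.ext fun p => by simp [map_smul]

end Precomp

end Char


section Reps

variable (V : Type u) [Quiver.{u} V] (R : Type u) [Ring R]

/-- The category of representations of the quiver `V` with values in left `R`-modules. -/
abbrev RepL := Paths V ⥤ ModuleCat.{u} R

/-- The category of representations of the opposite quiver with values in right `R`-modules. -/
abbrev RepR := Paths Vᵒᵖ ⥤ ModuleCat.{u} Rᵐᵒᵖ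

/-- A vertex of `V`, seen as an object of the path category. -/
abbrev vtx' {V : Type u} [Quiver.{u} V] (i : V) : Paths V := i

/-- The representation `Hom(X, G) ∈ Rep(Qᵒᵖ, Rᵒᵖ)`, given vertexwise by `Hom_ℤ(X(i), G)`. -/
noncomputable def HomRepObj (X : RepL V R) (G : Type u) [AddCommGroup G] : RepR V R :=
  Paths.lift
    { obj := fun x => ModuleCat.of Rᵐᵒᵖ (↑(X.obj (vtx' x.unop)) →+ G)
      map := fun {x y} a =>
        ModuleCat.ofHom (precompHom (G := G) ((X.map a.unop.toPath).hom : ↑(X.obj (vtx' y.unop)) →ₗ[R] ↑(X.obj (vtx' x.unop))) :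
          _ →ₗ[Rᵐᵒᵖ] _) }

/-- The representation `Hom(Y, G) ∈ Rep(Q, R)` for `Y ∈ Rep(Qᵒᵖ, Rᵒᵖ)`. -/
noncomputable def HomRepObjOp (Y : RepR V R) (G : Type u) [AddCommGroup G] : RepL V R :=
  Paths.lift
    { obj := fun i => ModuleCat.of R (↑(Y.obj (vtx' (op i))) →+ G)
      map := fun {i j} a =>
        ModuleCat.ofHom (precompHomOp (G := G) ((Y.map a.op.toPath).hom : ↑(Y.obj (vtx' (op j))) →ₗ[Rᵐᵒᵖ] ↑(Y.obj (vtx' (op i)))) :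
          _ →ₗ[R] _) }

/-- The character representation `X⁺ = Hom(X, ℚ/ℤ)`. -/
noncomputable def charRep (X : RepL V R) : RepR V R :=
  HomRepObj V R X (ULift.{u} (AddCircle (1 : ℚ)))

section Tensor

variable {V R}

/-- The underlying group of the tensor product of representations before dividing out
by the relations coming from arrows. -/
noncomputable abbrev repTensorBase (Y : RepR V R) (X : RepL V R) : Type u :=
  ⨁ (i : V), NcTensor R (↑(Y.obj (vtx' (op i)))) (↑(X.obj (vtx' i)))

open scoped Classical in
/-- The relations defining the tensor product of representations. -/
noncomputable def repTensorRel (Y : RepR V R) (X : RepL V R) :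
    Submodule ℤ (repTensorBase Y X) :=
  Submodule.span ℤ {z | ∃ (i j : V) (a : i ⟶ j) (y : ↑(Y.obj (vtx' (op j)))) (x : ↑(X.obj (vtx' i))),
    z = DirectSum.of _ i (NcTensor.tmul R _ _ (Y.map a.op.toPath y) x)
      - DirectSum.of _ j (NcTensor.tmul R _ _ y (X.map a.toPath x))}

/-- The tensor product `Y ⊗_Q X` of representations, for `Y ∈ Rep(Qᵒᵖ, Rᵒᵖ)` and
`X ∈ Rep(Q, R)`. -/
noncomputable abbrev RepTensor (Y : RepR V R) (X : RepL V R) : Type u :=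
  repTensorBase Y X ⧸ repTensorRel Y X

open scoped Classical in
/-- Functoriality of the tensor product of representations. -/
noncomputable def RepTensor.map {Y Y' : RepR V R} {X X' : RepL V R}
    (g : Y ⟶ Y') (f : X ⟶ X') : RepTensor Y X →ₗ[ℤ] RepTensor Y' X' :=
  Submodule.mapQ _ _
    (DirectSum.toModule ℤ V (repTensorBase Y' X') fun i =>
      (DirectSum.lof ℤ V _ i).comp
        (NcTensor.map R ((g.app (vtx' (op i))).hom : _ →ₗ[Rᵐᵒᵖ] _) ((f.app (vtx' i)).hom : _ →ₗ[R] _)))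
    (by
      refine Submodule.span_le.2 ?_
      rintro z ⟨i, j, a, y, x, rfl⟩
      refine Submodule.mem_comap.2 ?_
      rw [map_sub, ← DirectSum.lof_eq_of ℤ, ← DirectSum.lof_eq_of ℤ,
        DirectSum.toModule_lof, DirectSum.toModule_lof]
      refine Submodule.subset_span ?_
      refine ⟨i, j, a, g.app (vtx' (op j)) y, f.app (vtx' i) x, ?_⟩
      have hg : g.app (vtx' (op i)) (Y.map a.op.toPath y)
          = Y'.map a.op.toPath (g.app (vtx' (op j)) y) := by
        have h := g.naturality (a.op.toPath : vtx' (op j) ⟶ vtx' (op i))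
        exact LinearMap.congr_fun (congrArg ModuleCat.Hom.hom h) y
      have hf : f.app (vtx' j) (X.map a.toPath x)
          = X'.map a.toPath (f.app (vtx' i) x) := by
        have h := f.naturality (a.toPath : vtx' i ⟶ vtx' j)
        exact LinearMap.congr_fun (congrArg ModuleCat.Hom.hom h) x
      simp only [LinearMap.comp_apply, NcTensor.map_tmul, DirectSum.lof_eq_of]
      rw [hg, hf])

end Tensor

end Reps




section More

variable (V : Type u) [Quiver.{u} V] (R : Type u) [Ring R]

/-- Cotorsion left `R`-modules. -/
def IsCotorsionModule (M : ModuleCat.{u} R) : Prop :=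
  ∀ F : ModuleCat.{u} R, IsFlatModule R F → ext1Zero F M

/-- A right coherent ring: every finitely generated right ideal is finitely presented. -/
def RightCoherent : Prop :=
  ∀ I : Submodule Rᵐᵒᵖ R, I.FG → Module.FinitePresentation Rᵐᵒᵖ ↥I

/-- Flat representations: colimits of projective representations. -/
def IsFlatRep (Xr : RepL V R) : Prop :=
  ∃ (J : Cat.{u, u}) (D : ↥J ⥤ RepL V R) (c : Limits.Cocone D),
    (∀ j, Projective (D.obj j)) ∧ Nonempty (Limits.IsColimit c) ∧ Nonempty (c.pt ≅ Xr)

/-- Gorenstein flat representations. -/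
def IsGorensteinFlatRep (Xr : RepL V R) : Prop :=
  ∃ (F : ℤ → RepL V R) (d : ∀ n : ℤ, F (n + 1) ⟶ F n),
    (∀ n, IsFlatRep V R (F n)) ∧
    (∀ n, ∃ w : d (n + 1) ≫ d n = 0, (ShortComplex.mk (d (n + 1)) (d n) w).Exact) ∧
    Nonempty (Xr ≅ cokernel (d 0)) ∧
    ∀ (E : RepR V R), Injective E → ∀ n : ℤ,
      Function.Exact (RepTensor.map (𝟙 E) (d (n + 1))) (RepTensor.map (𝟙 E) (d n))

/-- Projectively coresolved Gorenstein flat representations. -/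
def IsPGFRep (Xr : RepL V R) : Prop :=
  ∃ (P : ℤ → RepL V R) (d : ∀ n : ℤ, P (n + 1) ⟶ P n),
    (∀ n, Projective (P n)) ∧
    (∀ n, ∃ w : d (n + 1) ≫ d n = 0, (ShortComplex.mk (d (n + 1)) (d n) w).Exact) ∧
    Nonempty (Xr ≅ cokernel (d 0)) ∧
    ∀ (E : RepR V R), Injective E → ∀ n : ℤ,
      Function.Exact (RepTensor.map (𝟙 E) (d (n + 1))) (RepTensor.map (𝟙 E) (d n))

end More

section Swap

variable (R : Type u) [Ring R]
variable (M : Type u) [AddCommGroup M] [Module R M]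
variable (E : Type u) [AddCommGroup E] [Module Rᵐᵒᵖ E]

/-- Relations for the tensor product `M ⊗_{Rᵒᵖ} E` of a right `Rᵒᵖ`-module `M`
and a left `Rᵒᵖ`-module `E`. -/
def ncRel' : Submodule ℤ (TensorProduct ℤ M E) :=
  Submodule.span ℤ {z | ∃ (m : M) (r : R) (e : E),
    z = (r • m) ⊗ₜ[ℤ] e - m ⊗ₜ[ℤ] (MulOpposite.op r • e)}

/-- The tensor product `M ⊗_{Rᵒᵖ} E`. -/
abbrev NcTensorSwap := TensorProduct ℤ M E ⧸ ncRel' R M E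

variable {M E}

/-- The generator `m ⊗ e` of `M ⊗_{Rᵒᵖ} E`. -/
noncomputable def NcTensorSwap.tmul (m : M) (e : E) : NcTensorSwap R M E :=
  Submodule.Quotient.mk (m ⊗ₜ[ℤ] e)

variable (V : Type u) [Quiver.{u} V]

/-- The base of the tensor product `X ⊗_{Qᵒᵖ} Y`. -/
noncomputable abbrev repTensorSwapBase (X : RepL V R) (Y : RepR V R) : Type u :=
  ⨁ (i : V), NcTensorSwap R (↑(X.obj i)) (↑(Y.obj (op i)))

open scoped Classical in
/-- The relations of the tensor product `X ⊗_{Qᵒᵖ} Y`. -/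
noncomputable def repTensorSwapRel (X : RepL V R) (Y : RepR V R) :
    Submodule ℤ (repTensorSwapBase R V X Y) :=
  Submodule.span ℤ {z | ∃ (j i : V) (a : j ⟶ i) (x : ↑(X.obj j)) (y : ↑(Y.obj (op i))),
    z = DirectSum.of _ i (NcTensorSwap.tmul R (X.map a.toPath x) y)
      - DirectSum.of _ j (NcTensorSwap.tmul R x (Y.map a.op.toPath y))}

/-- The tensor product `X ⊗_{Qᵒᵖ} Y` of representations, i.e. the tensor product over the
opposite quiver of the opposite ring. -/
noncomputable abbrev RepTensorSwap (X : RepL V R) (Y : RepR V R) : Type u :=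
  repTensorSwapBase R V X Y ⧸ repTensorSwapRel R V X Y

end Swap

section Eval

variable {V : Type u} [Quiver.{u} V] {R : Type u} [Ring R]

/-- Evaluation helper identifying the vertex value of `Hom(X, G)` with `Hom_ℤ(X(i), G)`. -/
def homRepEval (X : RepL V R) (G : Type u) [AddCommGroup G] {v : Vᵒᵖ}
    (s : ↑((HomRepObj V R X G).obj v)) : ↑(X.obj v.unop) →+ G := s

/-- Evaluation helper identifying the vertex value of `Hom(Y, G)` with `Hom_ℤ(Y(i), G)`. -/
def homRepOpEval (Y : RepR V R) (G : Type u) [AddCommGroup G] {i : V}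
    (s : ↑((HomRepObjOp V R Y G).obj i)) : ↑(Y.obj (op i)) →+ G := s

end Eval

end QuiverGF

section Statements

open CategoryTheory CategoryTheory.Limits Opposite QuiverGF
open scoped DirectSum

/-!
For an abelian group `G`, a right module `E` and a left module `M`, the tensor–hom adjunction reads
`Hom_ℤ(E ⊗_R M, G) ≅ Hom(E, Hom_ℤ(M, G))`. If `G` is divisible, it shows that `Hom_ℤ(-, G)` turns
flat modules into injective ones, and `E ⊗_R -`-exactness into `Hom(E, -)`-exactness. So the dual of
a totally acyclic complex of flat modules is a totally acyclic complex of injective modules, and the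
dual of a cycle, being the dual of an opcycle of the neighbouring degree, is again a cycle.
On representations, `Hom_ℤ(-, G)` is exact and turns coproducts into products, so `ψᵢ` of the dual
is the dual of `φᵢ`, and its kernel is the dual of `Cᵢ`.
-/

namespace QuiverGF

section TensorHom

variable {R : Type u} [Ring R] {E M G : Type u} [AddCommGroup E] [Module Rᵐᵒᵖ E]
variable [AddCommGroup M] [Module R M] [AddCommGroup G]

namespace NcTensor

lemma tmul_add (e : E) (m m' : M) :
    tmul R E M e (m + m') = tmul R E M e m + tmul R E M e m' :=
  congrArg _ (TensorProduct.tmul_add e m m')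

lemma add_tmul (e e' : E) (m : M) :
    tmul R E M (e + e') m = tmul R E M e m + tmul R E M e' m :=
  congrArg _ (TensorProduct.add_tmul e e' m)

lemma op_smul_tmul (r : R) (e : E) (m : M) :
    tmul R E M (MulOpposite.op r • e) m = tmul R E M e (r • m) :=
  (Submodule.Quotient.eq _).2 (Submodule.subset_span ⟨e, r, m, rfl⟩)

lemma addMonoidHom_ext {f g : NcTensor R E M →+ G}
    (h : ∀ e m, f (tmul R E M e m) = g (tmul R E M e m)) : f = g := by
  ext z
  obtain ⟨t, rfl⟩ := Submodule.Quotient.mk_surjective _ z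
  induction t with
  | zero => exact (map_zero f).trans (map_zero g).symm
  | tmul e m => exact h e m
  | add s t hs ht => exact (map_add f _ _).trans ((congrArg₂ _ hs ht).trans (map_add g _ _).symm)

/-- The homomorphism out of `E ⊗_R M` induced by an `R`-balanced biadditive map, which is encoded
as a linear map into the right module `Hom_ℤ(M, G)`. -/
noncomputable def lift (b : E →ₗ[Rᵐᵒᵖ] (M →+ G)) : NcTensor R E M →+ G :=
  (Submodule.liftQ (ncRel R E M)
    (TensorProduct.liftAddHom b.toAddMonoidHom fun n e m => by simp).toIntLinearMap
    (Submodule.span_le.2 (by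
      rintro _ ⟨e, r, m, rfl⟩
      simp))).toAddMonoidHom

/-- The tensor–hom adjunction `Hom_ℤ(E ⊗_R M, G) ≃ Hom_{Rᵐᵒᵖ}(E, Hom_ℤ(M, G))`. -/
noncomputable def homEquiv : (NcTensor R E M →+ G) ≃+ (E →ₗ[Rᵐᵒᵖ] (M →+ G)) where
  toFun t :=
    { toFun e := .mk' (fun m => t (tmul R E M e m)) fun m m' => by rw [tmul_add, map_add]
      map_add' e e' := by ext m; simp [add_tmul]
      map_smul' r e := by ext m; simpa using congrArg t (op_smul_tmul r.unop e m) }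
  invFun := lift
  left_inv t := addMonoidHom_ext fun e m => rfl
  right_inv b := rfl
  map_add' s t := rfl

end NcTensor

end TensorHom

section Dual

variable {R : Type u} [Ring R] {G : Type u} [AddCommGroup G]

/-- Currying: both sides encode the biadditive maps `b` with `b (r • m) e = b m (e • r)`. -/
def dualFlip {E M : Type u} [AddCommGroup E] [Module Rᵐᵒᵖ E] [AddCommGroup M] [Module R M] :
    (M →ₗ[R] (E →+ G)) ≃ (E →ₗ[Rᵐᵒᵖ] (M →+ G)) where
  toFun b :=
    { b.toAddMonoidHom.flip with
      map_smul' r e := by ext m; simp }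
  invFun b :=
    { b.toAddMonoidHom.flip with
      map_smul' r e := by ext m; simp }
  left_inv _ := rfl
  right_inv _ := rfl

variable (R G)

/-- The contravariant functor `Hom_ℤ(-, G)` from left to right `R`-modules. -/
def dualFunctor : (ModuleCat.{u} R)ᵒᵖ ⥤ ModuleCat.{u} Rᵐᵒᵖ where
  obj M := ModuleCat.of Rᵐᵒᵖ (M.unop →+ G)
  map f := ModuleCat.ofHom (precompHom f.unop.hom)

instance : (dualFunctor R G).Additive where
  map_add {M N f g} := by
    ext (s : M.unop →+ G)
    exact AddMonoidHom.ext fun n => map_add s _ _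

instance : (dualFunctor R G).IsRightAdjoint :=
  (Adjunction.adjunctionOfEquivLeft
    (e := fun (E : ModuleCat.{u} Rᵐᵒᵖ) M => (opEquiv (op (ModuleCat.of R (E →+ G))) M).trans <|
      ModuleCat.homEquiv.trans <| dualFlip.trans
        (ModuleCat.homEquiv (M := E) (N := (dualFunctor R G).obj M)).symm)
    fun _ _ _ _ _ => rfl).isRightAdjoint

instance [DivisibleBy G ℤ] : (dualFunctor R G).PreservesEpimorphisms where
  preserves {M N} f _ := by
    rw [ModuleCat.epi_iff_surjective]
    intro (s : N.unop →+ G)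
    exact (Module.Baer.of_divisible G).extension_property_addMonoidHom
      f.unop.hom.toAddMonoidHom ((ModuleCat.mono_iff_injective _).1 inferInstance) s

instance [DivisibleBy G ℤ] : (dualFunctor R G).PreservesHomology :=
  Functor.preservesHomology_of_preservesEpis_and_kernels _

variable {R}

lemma exists_iso_dual_sigma {α β : Type u} (ε : β ≃ α) (Z : α → ModuleCat.{u} R) :
    ∃ e : (dualFunctor R G).obj (op (∐ Z)) ≅ ∏ᶜ fun b => (dualFunctor R G).obj (op (Z (ε b))),
      ∀ b, e.hom ≫ Pi.π _ b = (dualFunctor R G).map (Sigma.ι Z (ε b)).op := by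
  have isLimit := Fan.isLimitEquivOfEquiv ε _
    (isLimitFanMkObjOfIsLimit (dualFunctor R G) _ _ (Cofan.IsColimit.op (coproductIsCoproduct Z)))
  exact ⟨isLimit.conePointUniqueUpToIso (limit.isLimit _),
    fun b => isLimit.conePointUniqueUpToIso_hom_comp _ ⟨b⟩⟩

end Dual

section Divisible

variable {R : Type u} [Ring R] {G : Type u} [AddCommGroup G]

/-- The tensor–hom adjunction for `E ⊗_R M`, with values in the category of right modules. -/
noncomputable def dualHomEquiv (E : ModuleCat.{u} Rᵐᵒᵖ) (M : ModuleCat.{u} R) :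
    (NcTensor R E M →+ G) ≃+ (E ⟶ (dualFunctor R G).obj (op M)) :=
  NcTensor.homEquiv.trans
    (ModuleCat.homAddEquiv (M := E) (N := (dualFunctor R G).obj (op M))).symm

lemma dualHomEquiv_comp_map {E E' : ModuleCat.{u} Rᵐᵒᵖ} {M M' : ModuleCat.{u} R}
    (t : NcTensor R E' M' →+ G) (f : E ⟶ E') (g : M ⟶ M') :
    dualHomEquiv E M (t.comp (NcTensor.map R f.hom g.hom).toAddMonoidHom) =
      f ≫ dualHomEquiv E' M' t ≫ (dualFunctor R G).map g.op :=
  rfl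

variable [DivisibleBy G ℤ]

lemma IsFlatModule.injective_dual {M : ModuleCat.{u} R} (hM : IsFlatModule R M) :
    Injective ((dualFunctor R G).obj (op M)) where
  factors {E E'} g f _ := by
    obtain ⟨t, ht⟩ := (Module.Baer.of_divisible G).extension_property_addMonoidHom
      (NcTensor.map R f.hom (LinearMap.id (M := M))).toAddMonoidHom
      (hM E E' f ((ModuleCat.mono_iff_injective f).1 inferInstance))
      ((dualHomEquiv E M).symm g)
    refine ⟨dualHomEquiv E' M t, ?_⟩
    calc f ≫ dualHomEquiv E' M t
        = f ≫ dualHomEquiv E' M t ≫ (dualFunctor R G).map (𝟙 M).op := by simp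
      _ = dualHomEquiv E M (t.comp (NcTensor.map R f.hom LinearMap.id).toAddMonoidHom) :=
        (dualHomEquiv_comp_map t f (𝟙 M)).symm
      _ = g := by rw [ht, AddEquiv.apply_symm_apply]

lemma exact_addMonoidHom_comp {A B C : Type u} [AddCommGroup A] [AddCommGroup B] [AddCommGroup C]
    {f : A →+ B} {g : B →+ C} (h : Function.Exact f g) :
    Function.Exact (fun t : C →+ G => t.comp g) (fun t : B →+ G => t.comp f) := by
  have hS : (ShortComplex.mk (AddCommGrpCat.ofHom f) (AddCommGrpCat.ofHom g)
      (by ext a; exact h.apply_apply_eq_zero a)).Exact :=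
    (ShortComplex.ab_exact_iff_function_exact _).2 h
  refine fun t => ⟨fun ht => ?_, ?_⟩
  · let t' : AddCommGrpCat.of B ⟶ AddCommGrpCat.of G := AddCommGrpCat.ofHom t
    have ht' : AddCommGrpCat.ofHom f ≫ t' = 0 := congrArg AddCommGrpCat.ofHom ht
    exact ⟨(hS.descToInjective t' ht').hom,
      congrArg AddCommGrpCat.Hom.hom (hS.comp_descToInjective t' ht')⟩
  · rintro ⟨s, rfl⟩
    ext a
    simp [h.apply_apply_eq_zero a]

lemma exact_comp_dualFunctor_map (E : ModuleCat.{u} Rᵐᵒᵖ) {A B C : ModuleCat.{u} R} {f : A ⟶ B}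
    {g : B ⟶ C}
    (h : Function.Exact (NcTensor.map R (LinearMap.id (M := E)) f.hom)
      (NcTensor.map R (LinearMap.id (M := E)) g.hom)) :
    Function.Exact (fun s : E ⟶ (dualFunctor R G).obj (op C) => s ≫ (dualFunctor R G).map g.op)
      (fun s : E ⟶ (dualFunctor R G).obj (op B) => s ≫ (dualFunctor R G).map f.op) := by
  have hom_exact := exact_addMonoidHom_comp (G := G)
    (f := (NcTensor.map R (LinearMap.id (M := E)) f.hom).toAddMonoidHom)
    (g := (NcTensor.map R (LinearMap.id (M := E)) g.hom).toAddMonoidHom) h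
  intro s
  obtain ⟨t, rfl⟩ := (dualHomEquiv E B).surjective s
  exact (map_eq_zero_iff (dualHomEquiv E A) (dualHomEquiv E A).injective).trans <|
    (hom_exact t).trans <| (dualHomEquiv E C).toEquiv.exists_congr fun _ =>
      (dualHomEquiv E B).injective.eq_iff.symm

end Divisible

section Complexes

variable {A : Type*} [Category* A] [Abelian A] {ι : Type*} {c : ComplexShape ι}

lemma isIso_opcyclesToCycles (K : HomologicalComplex A c) {i j : ι} (hij : c.Rel i j)
    (hi : K.ExactAt i) (hj : K.ExactAt j) : IsIso (K.opcyclesToCycles i j) := by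
  have exact_seq := HomologicalComplex.HomologySequence.composableArrows₃_exact K i j hij
  have : Mono (K.opcyclesToCycles i j) :=
    (exact_seq.exact 0).mono_g (hi.isZero_homology.eq_of_src _ _)
  have : Epi (K.opcyclesToCycles i j) :=
    (exact_seq.exact 1).epi_f (hj.isZero_homology.eq_of_tgt _ _)
  exact isIso_of_mono_of_epi _

lemma IsGorensteinInjective.of_iso {M N : A} (hM : IsGorensteinInjective M) (e : N ≅ M) :
    IsGorensteinInjective N :=
  let ⟨I, d, injective, exact_d, ⟨e'⟩, hom_exact⟩ := hM
  ⟨I, d, injective, exact_d, ⟨e ≪≫ e'⟩, hom_exact⟩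

lemma isGorensteinInjective_cycles {L : HomologicalComplex A c} (acyclic : L.Acyclic)
    (injective : ∀ i, Injective (L.X i))
    (hom_exact : ∀ E : A, Injective E → ∀ i j k, c.Rel i j → c.Rel j k →
      Function.Exact (fun f : E ⟶ L.X i => f ≫ L.d i j) (fun f : E ⟶ L.X j => f ≫ L.d j k))
    (ε : ℤ → ι) (hε : ∀ n, c.Rel (ε n) (ε (n + 1))) :
    IsGorensteinInjective (L.cycles (ε 0)) :=
  ⟨fun n => L.X (ε n), fun n => L.d (ε n) (ε (n + 1)), fun _ => injective _,
    fun n => ⟨L.d_comp_d _ _ _,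
      (L.exactAt_iff' _ _ _ (c.prev_eq' (hε n)) (c.next_eq' (hε (n + 1)))).1 (acyclic _)⟩,
    ⟨(L.cyclesIsKernel _ _ (c.next_eq' (hε 0))).conePointUniqueUpToIso (limit.isLimit _)⟩,
    fun E hE n => hom_exact E hE _ _ _ (hε n) (hε (n + 1))⟩

end Complexes

section Gorenstein

variable {R : Type u} [Ring R]

lemma IsGorensteinFlatModule.exists_cochainComplex {M : ModuleCat.{u} R}
    (hM : IsGorensteinFlatModule R M) :
    ∃ K : CochainComplex (ModuleCat.{u} R) ℤ, K.Acyclic ∧ (∀ i, IsFlatModule R (K.X i)) ∧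
      Nonempty (M ≅ K.cycles 0) ∧
      ∀ E : ModuleCat.{u} Rᵐᵒᵖ, Injective E → ∀ i j k, i + 1 = j → j + 1 = k →
        Function.Exact (NcTensor.map R (LinearMap.id (M := E)) (K.d i j).hom)
          (NcTensor.map R (LinearMap.id (M := E)) (K.d j k).hom) := by
  obtain ⟨F, d, flat, exact_d, ⟨e⟩, tensor_exact⟩ := hM
  have d_comp_d (n : ℤ) : d n ≫ d (n + 1) = 0 := by
    ext x
    exact (exact_d n).apply_apply_eq_zero x
  have d_eq (n : ℤ) : (CochainComplex.of F d d_comp_d).d n (n + 1) = d n := CochainComplex.of_d ..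
  refine ⟨.of F d d_comp_d, fun i => ?_, flat, ⟨?_⟩, ?_⟩
  · obtain ⟨n, rfl⟩ : ∃ n, n + 1 = i := ⟨i - 1, by simp⟩
    rw [HomologicalComplex.exactAt_iff' _ n (n + 1) (n + 1 + 1) (by simp) (by simp),
      ShortComplex.ShortExact.moduleCat_exact_iff_function_exact]
    change Function.Exact ((CochainComplex.of F d d_comp_d).d n (n + 1))
      ((CochainComplex.of F d d_comp_d).d (n + 1) (n + 1 + 1))
    rw [d_eq, d_eq]
    exact exact_d n
  · exact e.toModuleIso ≪≫ (ModuleCat.kernelIsoKer _).symm ≪≫ kernelIsoOfEq (d_eq 0).symm ≪≫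
      (limit.isLimit _).conePointUniqueUpToIso
        (HomologicalComplex.cyclesIsKernel _ 0 (0 + 1) (by simp))
  · rintro E hE i _ _ rfl rfl
    rw [d_eq, d_eq]
    exact tensor_exact E hE i

variable (G : Type u) [AddCommGroup G] [DivisibleBy G ℤ]

theorem IsGorensteinFlatModule.isGorensteinInjective_dual {M : ModuleCat.{u} R}
    (hM : IsGorensteinFlatModule R M) :
    IsGorensteinInjective ((dualFunctor R G).obj (op M)) := by
  obtain ⟨K, acyclic, flat, ⟨e⟩, tensor_exact⟩ := hM.exists_cochainComplex
  -- The differentials of `K.op` lower degrees, so `L` is read along `n ↦ -1 - n`. The shift by one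
  -- turns the opcycles of `K` in degree `-1` into its cycles in degree `0`.
  let L := ((dualFunctor R G).mapHomologicalComplex _).obj K.op
  have acyclic_L : L.Acyclic := fun i => (acyclic.op i).map (dualFunctor R G)
  have cycles_L : IsGorensteinInjective (L.cycles (-1 - 0)) :=
    isGorensteinInjective_cycles acyclic_L (fun i => (flat i).injective_dual)
      (fun E hE i j k hij hjk => exact_comp_dualFunctor_map E (tensor_exact E hE _ _ _ hjk hij))
      (fun n => -1 - n) fun n => by simp; ring
  have : IsIso (K.opcyclesToCycles (-1 - 0) 0) :=
    isIso_opcyclesToCycles K (by simp) (acyclic _) (acyclic _)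
  exact cycles_L.of_iso <| (dualFunctor R G).mapIso
    ((e ≪≫ (asIso (K.opcyclesToCycles (-1 - 0) 0)).symm).symm.op ≪≫ (K.cyclesOpIso _).symm) ≪≫
    ((K.op.sc _).mapCyclesIso _).symm

end Gorenstein

section Representations

/-- An arrow of the opposite quiver out of `i` is an arrow of the quiver into `i.unop`. -/
def opArrowsEquiv {V : Type*} [Quiver V] (i : Vᵒᵖ) :
    (Σ j : Vᵒᵖ, i ⟶ j) ≃ Σ j : V, j ⟶ i.unop where
  toFun p := ⟨p.1.unop, p.2.unop⟩
  invFun p := ⟨op p.1, p.2.op⟩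
  left_inv _ := rfl
  right_inv _ := rfl

variable {V : Type u} [Quiver.{u} V] {R : Type u} [Ring R]

lemma HomRepObj_map_toPath (X : RepL V R) (G : Type u) [AddCommGroup G] {i j : Vᵒᵖ} (a : i ⟶ j) :
    (HomRepObj V R X G).map a.toPath = (dualFunctor R G).map (X.map a.unop.toPath).op :=
  Paths.lift_toPath _ a

lemma exists_psi_homRepObj_eq (X : RepL V R) (G : Type u) [AddCommGroup G] (i : Vᵒᵖ) :
    ∃ e : (dualFunctor R G).obj (op (∐ fun p : Σ j : V, j ⟶ i.unop => X.obj (vtx p.1))) ≅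
      ∏ᶜ fun p : Σ j : Vᵒᵖ, i ⟶ j => (HomRepObj V R X G).obj (vtx p.1),
      psi (HomRepObj V R X G) i = (dualFunctor R G).map (phi X i.unop).op ≫ e.hom := by
  obtain ⟨e, e_hom_π⟩ := exists_iso_dual_sigma G (opArrowsEquiv i) fun p => X.obj (vtx p.1)
  refine ⟨e, Pi.hom_ext _ _ fun p => ?_⟩
  have ι_phi : Sigma.ι _ (opArrowsEquiv i p) ≫ phi X i.unop = X.map (opArrowsEquiv i p).2.toPath :=
    Sigma.ι_desc _ _
  have map_phi_e_π : (dualFunctor R G).map (phi X i.unop).op ≫ e.hom ≫ Pi.π _ p =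
      (dualFunctor R G).map (X.map (opArrowsEquiv i p).2.toPath).op := by
    rw [e_hom_π, ← Functor.map_comp, ← op_comp, ι_phi]
  exact (Pi.lift_π _ p).trans <| (HomRepObj_map_toPath X G p.2).trans <|
    map_phi_e_π.symm.trans (Category.assoc _ _ _).symm

end Representations

end QuiverGF

theorem stmt13_general (R : Type u) [Ring R] (V : Type u) [Quiver.{u} V] (G : Type u)
    [AddCommGroup G] [DivisibleBy G ℤ] (X : RepL V R)
    (hX : X ∈ PhiClass (V := V) {M : ModuleCat.{u} R | IsGorensteinFlatModule R M}) :
    HomRepObj V R X G ∈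
      PsiClass (V := Vᵒᵖ) {N : ModuleCat.{u} Rᵐᵒᵖ | IsGorensteinInjective N} := by
  intro i
  obtain ⟨phi_mono, vertex_flat, cokernel_flat⟩ := hX i.unop
  obtain ⟨e, psi_eq⟩ := exists_psi_homRepObj_eq X G i
  refine ⟨?_, vertex_flat.isGorensteinInjective_dual G, ?_⟩
  · exact psi_eq ▸ (epi_comp ((dualFunctor R G).map (phi X i.unop).op) e.hom :)
  · exact (cokernel_flat.isGorensteinInjective_dual G).of_iso <|
      kernelIsoOfEq psi_eq ≪≫ kernelCompMono _ _ ≪≫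
        (PreservesKernel.iso (dualFunctor R G) (phi X i.unop).op).symm ≪≫
        (dualFunctor R G).mapIso (kernelOpUnop (phi X i.unop)).op.symm

theorem stmt13 (R : Type u) [Ring R] (V : Type u) [Quiver.{u} V] (X : RepL V R)
    (hX : X ∈ PhiClass (V := V) {M : ModuleCat.{u} R | IsGorensteinFlatModule R M}) :
    charRep V R X ∈ PsiClass (V := Vᵒᵖ) {N : ModuleCat.{u} Rᵐᵒᵖ | IsGorensteinInjective N} :=
  stmt13_general R V _ X hX

end Statements
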